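/- Let n ≥ 1 and let w : (Fin n → Bool) → ℝ be nonnegative weights with Σ_s w(s) = 1. Let 0̄ denote the constant-false string, h(s) the Hamming weight of s (number of indices with s(j) = true), L_G = 1 − w(0̄) = Σ_{s ≠ 0̄} w(s), and L_L = Σ_s (h(s)/n) · w(s). Then L_L ≤ L_G ≤ n · L_L. -/

import Mathlib

/-!
Both inequalities hold termwise once `L_G` is written as `∑_{s ≠ 0̄} w(s)`: the zero string has
Hamming weight `0`, and every other string has `1 ≤ h(s) ≤ n`, so that
`(h(s)/n) w(s) ≤ w(s) ≤ n · (h(s)/n) w(s)`.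
-/

open Finset

/-- The Hamming weight of a bit string `s : Fin n → Bool`. -/
def hammingWt {n : ℕ} (s : Fin n → Bool) : ℕ :=
  (Finset.univ.filter fun j => s j = true).card

theorem hammingWt_le {n : ℕ} (s : Fin n → Bool) : hammingWt s ≤ n := by
  simpa [hammingWt] using Finset.card_le_univ (Finset.univ.filter fun j => s j = true)

theorem hammingWt_zero {n : ℕ} : hammingWt (fun _ : Fin n => false) = 0 := by
  simp [hammingWt]

theorem one_le_hammingWt {n : ℕ} {s : Fin n → Bool} (hs : s ≠ fun _ => false) :
    1 ≤ hammingWt s := by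
  obtain ⟨j, hj⟩ := Function.ne_iff.mp hs
  exact Finset.card_pos.mpr ⟨j, by simpa using hj⟩

/-- **Equivalence of the VQLS global and local losses:**
for nonnegative measurement probabilities `w` with `∑ w = 1`, setting
`L_G = 1 − w(0̄) = ∑_{s ≠ 0̄} w(s)` and `L_L = ∑_s (h(s)/n) w(s)`,
one has `L_L ≤ L_G ≤ n·L_L`. -/
theorem vqls_local_global_loss_equivalence
    (n : ℕ) (hn : 1 ≤ n) (w : (Fin n → Bool) → ℝ)
    (hw : ∀ s, 0 ≤ w s) (hsum : ∑ s : Fin n → Bool, w s = 1) :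
    (1 - w (fun _ => false) =
        ∑ s ∈ Finset.univ.filter (fun s : Fin n → Bool => s ≠ fun _ => false), w s) ∧
    (∑ s : Fin n → Bool, ((hammingWt s : ℝ) / n) * w s) ≤
        1 - w (fun _ => false) ∧
      1 - w (fun _ => false) ≤
        n * ∑ s : Fin n → Bool, ((hammingWt s : ℝ) / n) * w s := by
  have hG : 1 - w (fun _ => false) =
      ∑ s ∈ Finset.univ.filter (fun s : Fin n → Bool => s ≠ fun _ => false), w s := by
    rw [Finset.filter_ne', ← hsum, ← Finset.add_sum_erase _ w (Finset.mem_univ fun _ => false)]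
    ring
  have hn' : (0 : ℝ) < n := by exact_mod_cast hn
  refine ⟨hG, ?_, ?_⟩
  · rw [hG, Finset.sum_filter]
    refine Finset.sum_le_sum fun s _ => ?_
    split_ifs with hs
    · refine mul_le_of_le_one_left (hw s) ((div_le_one hn').mpr ?_)
      exact_mod_cast hammingWt_le s
    · rw [not_not.mp hs, hammingWt_zero]
      simp
  · rw [hG, Finset.sum_filter, Finset.mul_sum]
    refine Finset.sum_le_sum fun s _ => ?_
    rw [← mul_assoc, mul_div_cancel₀ _ hn'.ne']
    split_ifs with hs
    · refine le_mul_of_one_le_left (hw s) ?_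
      exact_mod_cast one_le_hammingWt hs
    · exact mul_nonneg (Nat.cast_nonneg _) (hw s)
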